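/- Let f : ℝ → ℝ be twice continuously differentiable on (0,∞) with f''(x) > 0 for all x > 0 and f(1) = 0, and define d_f(s) = ((1-s)/2)·f((1+s)/(1-s)) + ((1+s)/2)·f((1-s)/(1+s)) for s ∈ [0,1). Then for every s ∈ (0,1) the second derivative of d_f at s equals (2/(1-s)^3)·f''((1+s)/(1-s)) + (2/(1+s)^3)·f''((1-s)/(1+s)) and is strictly positive; consequently d_f is strictly convex on [0,1). -/

import Mathlib

/-- The binary symmetric f-divergence. -/
noncomputable def binDiv (f : ℝ → ℝ) (s : ℝ) : ℝ :=
  ((1 - s) / 2) * f ((1 + s) / (1 - s)) + ((1 + s) / 2) * f ((1 - s) / (1 + s))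

/-!
The divergence averages the values of the perspective `(x, t) ↦ t * f (x / t)` at
`(1 + s, 1 - s)` and at `(1 - s, 1 + s)`. Along an affine line `(x, t)` with velocity `(x', t')`
the terms in `f'` cancel from the second derivative of the perspective, which leaves
`(x' * t - x * t') ^ 2 / t ^ 3 * f'' (x / t)`. On both lines the numerator is `(± 2) ^ 2`.
-/

open Set

section Perspective

variable {𝕜 : Type*} [NontriviallyNormedField 𝕜]

/-- The perspective of `f`, its extension to a function of two variables that is homogeneous of
degree one; each summand of `binDiv` is half of one of its values. It is meaningful for `t ≠ 0`
and takes the junk value `0` at `t = 0`. -/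
def perspective (f : 𝕜 → 𝕜) (x t : 𝕜) : 𝕜 :=
  t * f (x / t)

variable {f x t : 𝕜 → 𝕜} {x' t' s : 𝕜}

theorem hasDerivAt_perspective {f' : 𝕜} (hf : HasDerivAt f f' (x s / t s))
    (hx : HasDerivAt x x' s) (ht : HasDerivAt t t' s) (hts : t s ≠ 0) :
    HasDerivAt (fun r => perspective f (x r) (t r))
      (t' * f (x s / t s) + (x' - t' * (x s / t s)) * f') s := by
  refine (ht.mul (hf.comp s (hx.div ht hts))).congr_deriv ?_
  simp only [Function.comp_apply, Pi.div_apply]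
  field_simp

/-- For affine `x` and `t` with slopes `x'` and `t'`, the function differentiated here is the
derivative found in `hasDerivAt_perspective`. -/
theorem hasDerivAt_deriv_perspective {f' : 𝕜 → 𝕜} {f'' : 𝕜}
    (hf : HasDerivAt f (f' (x s / t s)) (x s / t s)) (hf' : HasDerivAt f' f'' (x s / t s))
    (hx : HasDerivAt x x' s) (ht : HasDerivAt t t' s) (hts : t s ≠ 0) :
    HasDerivAt (fun r => t' * f (x r / t r) + (x' - t' * (x r / t r)) * f' (x r / t r))
      ((x' * t s - x s * t') ^ 2 / t s ^ 3 * f'') s := by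
  have hu : HasDerivAt (x / t) ((x' * t s - x s * t') / t s ^ 2) s := hx.div ht hts
  have hfu := (hf.comp s hu).const_mul t'
  have hfu' := ((hu.const_mul t').const_sub x').mul (hf'.comp s hu)
  refine (hfu.add hfu').congr_deriv ?_
  simp only [Function.comp_apply, Pi.div_apply]
  field_simp
  ring

end Perspective

section BinDiv

variable {f : ℝ → ℝ} {s : ℝ}

theorem binDiv_eq_perspective (f : ℝ → ℝ) :
    binDiv f = fun s => (perspective f (1 + s) (1 - s) + perspective f (1 - s) (1 + s)) / 2 := by
  funext s
  simp only [binDiv, perspective]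
  ring

theorem hasDerivAt_binDiv (hf : DifferentiableOn ℝ f (Ioi 0)) (hs : s ∈ Ioo (-1) 1) :
    HasDerivAt (binDiv f)
      ((f ((1 - s) / (1 + s)) - f ((1 + s) / (1 - s)) +
        (1 + (1 + s) / (1 - s)) * deriv f ((1 + s) / (1 - s)) -
        (1 + (1 - s) / (1 + s)) * deriv f ((1 - s) / (1 + s))) / 2) s := by
  have hadd : 0 < 1 + s := by linarith [hs.1]
  have hsub : 0 < 1 - s := by linarith [hs.2]
  have hf' {y : ℝ} (hy : 0 < y) : HasDerivAt f (deriv f y) y := hf.hasDerivAt (Ioi_mem_nhds hy)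
  have dadd : HasDerivAt (fun r : ℝ => 1 + r) 1 s := (hasDerivAt_id' s).const_add 1
  have dsub : HasDerivAt (fun r : ℝ => 1 - r) (-1) s := (hasDerivAt_id' s).const_sub 1
  rw [binDiv_eq_perspective]
  have hleft := hasDerivAt_perspective (hf' (div_pos hadd hsub)) dadd dsub hsub.ne'
  have hright := hasDerivAt_perspective (hf' (div_pos hsub hadd)) dsub dadd hadd.ne'
  exact ((hleft.add hright).div_const 2).congr_deriv (by ring)

theorem hasDerivAt_deriv_binDiv (hf : DifferentiableOn ℝ f (Ioi 0))
    (hf' : DifferentiableOn ℝ (deriv f) (Ioi 0)) (hs : s ∈ Ioo (-1) 1) :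
    HasDerivAt (deriv (binDiv f))
      (2 / (1 - s) ^ 3 * deriv (deriv f) ((1 + s) / (1 - s)) +
        2 / (1 + s) ^ 3 * deriv (deriv f) ((1 - s) / (1 + s))) s := by
  have hadd : 0 < 1 + s := by linarith [hs.1]
  have hsub : 0 < 1 - s := by linarith [hs.2]
  have hu : Ioi (0 : ℝ) ∈ nhds ((1 + s) / (1 - s)) := Ioi_mem_nhds (div_pos hadd hsub)
  have hv : Ioi (0 : ℝ) ∈ nhds ((1 - s) / (1 + s)) := Ioi_mem_nhds (div_pos hsub hadd)
  have dadd : HasDerivAt (fun r : ℝ => 1 + r) 1 s := (hasDerivAt_id' s).const_add 1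
  have dsub : HasDerivAt (fun r : ℝ => 1 - r) (-1) s := (hasDerivAt_id' s).const_sub 1
  have hleft := hasDerivAt_deriv_perspective (hf.hasDerivAt hu) (hf'.hasDerivAt hu)
    dadd dsub hsub.ne'
  have hright := hasDerivAt_deriv_perspective (hf.hasDerivAt hv) (hf'.hasDerivAt hv)
    dsub dadd hadd.ne'
  refine (((hleft.add hright).div_const 2).congr_of_eventuallyEq ?_).congr_deriv (by ring)
  filter_upwards [isOpen_Ioo.mem_nhds hs] with r hr
  rw [(hasDerivAt_binDiv hf hr).deriv, Pi.add_apply]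
  ring

end BinDiv

theorem binDiv_second_deriv_and_strictConvex_general (f : ℝ → ℝ)
    (hf : DifferentiableOn ℝ f (Ioi 0))
    (hf'' : ∀ x : ℝ, 0 < x → 0 < deriv (deriv f) x) :
    (∀ s ∈ Ioo (-1 : ℝ) 1,
      deriv (deriv (binDiv f)) s =
          2 / (1 - s) ^ 3 * deriv (deriv f) ((1 + s) / (1 - s)) +
            2 / (1 + s) ^ 3 * deriv (deriv f) ((1 - s) / (1 + s)) ∧
        0 < deriv (deriv (binDiv f)) s) ∧
    StrictConvexOn ℝ (Ioo (-1 : ℝ) 1) (binDiv f) := by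
  have hf' : DifferentiableOn ℝ (deriv f) (Ioi 0) := fun x hx =>
    (differentiableAt_of_deriv_ne_zero (hf'' x hx).ne').differentiableWithinAt
  have hformula := fun s (hs : s ∈ Ioo (-1 : ℝ) 1) => (hasDerivAt_deriv_binDiv hf hf' hs).deriv
  have hpos : ∀ s ∈ Ioo (-1 : ℝ) 1, 0 < deriv (deriv (binDiv f)) s := by
    intro s hs
    have hadd : 0 < 1 + s := by linarith [hs.1]
    have hsub : 0 < 1 - s := by linarith [hs.2]
    have hu := hf'' _ (div_pos hadd hsub)
    have hv := hf'' _ (div_pos hsub hadd)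
    rw [hformula s hs]
    positivity
  refine ⟨fun s hs => ⟨hformula s hs, hpos s hs⟩, ?_⟩
  refine strictConvexOn_of_deriv2_pos' (convex_Ioo (-1) 1) ?_ hpos
  exact fun s hs => (hasDerivAt_binDiv hf hs).continuousAt.continuousWithinAt

theorem binDiv_second_deriv_and_strictConvex (f : ℝ → ℝ)
    (hf : ContDiffOn ℝ 2 f (Set.Ioi 0))
    (hf'' : ∀ x : ℝ, 0 < x → 0 < deriv (deriv f) x)
    (hf1 : f 1 = 0) :
    (∀ s : ℝ, 0 < s → s < 1 →
      deriv (deriv (binDiv f)) s =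
          2 / (1 - s) ^ 3 * deriv (deriv f) ((1 + s) / (1 - s)) +
            2 / (1 + s) ^ 3 * deriv (deriv f) ((1 - s) / (1 + s)) ∧
        0 < deriv (deriv (binDiv f)) s) ∧
    StrictConvexOn ℝ (Set.Ico (0 : ℝ) 1) (binDiv f) := by
  obtain ⟨hderiv, hconv⟩ := binDiv_second_deriv_and_strictConvex_general f
    (hf.differentiableOn two_ne_zero) hf''
  exact ⟨fun s h0 h1 => hderiv s ⟨by linarith, h1⟩,
    hconv.subset (Ico_subset_Ioo_left (by norm_num)) (convex_Ico 0 1)⟩
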